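/- For every nonnegative integer n, the identity E_{2n+1}(q)/(q;q)_{2n+1} = Σ_{D∈Dyck_{2n}} Π_{(a,b)∈D} q^b/(1−q^{2b+1}) holds in the field of rational functions ℚ(q), where the product runs over all lattice points (a,b) of the Dyck path D. -/

import Mathlib

open Finset

attribute [local instance 10] Classical.propDecidable

noncomputable section

namespace Paper

/-! ### Words and permutation statistics (all words are 1-based). -/

/-- The word (one-line notation, 1-based) of a permutation of `{1, …, N}`:
`word π i = π(i)` for `1 ≤ i ≤ N`, and `0` otherwise. -/
def word {N : ℕ} (π : Equiv.Perm (Fin N)) (i : ℕ) : ℕ :=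
  if h : 1 ≤ i ∧ i ≤ N then (π ⟨i - 1, by omega⟩ : ℕ) + 1 else 0

/-- The major index of a word of length `N`: the sum of the descents. -/
def majW (N : ℕ) (w : ℕ → ℕ) : ℕ :=
  ∑ i ∈ Finset.Icc 1 (N - 1), if w (i + 1) < w i then i else 0

/-- The number of inversions of a word of length `N`. -/
def invW (N : ℕ) (w : ℕ → ℕ) : ℕ :=
  (((Finset.Icc 1 N) ×ˢ (Finset.Icc 1 N)).filter
    fun p => p.1 < p.2 ∧ w p.2 < w p.1).card

/-- The number of descents of a word of length `m`. -/
def desW (m : ℕ) (w : ℕ → ℕ) : ℕ :=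
  ((Finset.Icc 1 (m - 1)).filter fun i => w (i + 1) < w i).card

/-- The number of ascents of a word of length `m`. -/
def ascW (m : ℕ) (w : ℕ → ℕ) : ℕ :=
  ((Finset.Icc 1 (m - 1)).filter fun i => w i < w (i + 1)).card

/-- The number of non-descents of a word of length `m`. -/
def ndesW (m : ℕ) (w : ℕ → ℕ) : ℕ :=
  ((Finset.Icc 1 m).filter fun i => i = m ∨ w i < w (i + 1)).card

/-- The number of non-ascents of a word of length `m`. -/
def nascW (m : ℕ) (w : ℕ → ℕ) : ℕ :=
  ((Finset.Icc 1 m).filter fun i => i = m ∨ ¬ w i < w (i + 1)).card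

/-- `π_e = π₂π₄⋯`, the subword of even-position entries, as a 1-based word. -/
def evenWord {N : ℕ} (π : Equiv.Perm (Fin N)) (j : ℕ) : ℕ := word π (2 * j)

/-- `π_o = π₁π₃⋯`, the subword of odd-position entries, as a 1-based word. -/
def oddWord {N : ℕ} (π : Equiv.Perm (Fin N)) (j : ℕ) : ℕ := word π (2 * j - 1)

/-- A word of length `N` is alternating: `w₁ < w₂ > w₃ < w₄ > ⋯`. -/
def IsAltW (N : ℕ) (w : ℕ → ℕ) : Prop :=
  ∀ i ∈ Finset.Icc 1 (N - 1), (i % 2 = 1 → w i < w (i + 1)) ∧ (i % 2 = 0 → w (i + 1) < w i)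

/-- A word of length `N` is reverse alternating: `w₁ > w₂ < w₃ > w₄ < ⋯`. -/
def IsRaltW (N : ℕ) (w : ℕ → ℕ) : Prop :=
  ∀ i ∈ Finset.Icc 1 (N - 1), (i % 2 = 1 → w (i + 1) < w i) ∧ (i % 2 = 0 → w i < w (i + 1))

/-- `Alt_N`, the set of alternating permutations of `{1, …, N}`. -/
def altPerms (N : ℕ) : Finset (Equiv.Perm (Fin N)) :=
  Finset.univ.filter fun π => IsAltW N (word π)

/-- `Ralt_N`, the set of reverse alternating permutations of `{1, …, N}`. -/
def raltPerms (N : ℕ) : Finset (Equiv.Perm (Fin N)) :=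
  Finset.univ.filter fun π => IsRaltW N (word π)

/-- `κ_N = (1)(2,3)(4,5)⋯`, acting on the 1-based values `{1, …, N}`. -/
def kappaNat (N j : ℕ) : ℕ :=
  if j % 2 = 0 ∧ 2 ≤ j ∧ j + 1 ≤ N then j + 1
  else if j % 2 = 1 ∧ 3 ≤ j ∧ j ≤ N then j - 1
  else j

/-- `η_N = (1,2)(3,4)⋯`, acting on the 1-based values `{1, …, N}`. -/
def etaNat (N j : ℕ) : ℕ :=
  if j % 2 = 1 ∧ j + 1 ≤ N then j + 1
  else if j % 2 = 0 ∧ 2 ≤ j ∧ j ≤ N then j - 1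
  else j

/-- `maj(π⁻¹)`. -/
def majInv (N : ℕ) (π : Equiv.Perm (Fin N)) : ℕ := majW N (word π.symm)

/-- `maj(κ_N π⁻¹)`. -/
def majKappaInv (N : ℕ) (π : Equiv.Perm (Fin N)) : ℕ :=
  majW N fun i => kappaNat N (word π.symm i)

/-- `maj(η_N π⁻¹)`. -/
def majEtaInv (N : ℕ) (π : Equiv.Perm (Fin N)) : ℕ :=
  majW N fun i => etaNat N (word π.symm i)

/-- The reversal permutation `i ↦ N + 1 - i` of `Fin N`. -/
def revPerm (N : ℕ) : Equiv.Perm (Fin N) :=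
  ⟨Fin.rev, Fin.rev, fun i => Fin.rev_rev i, fun i => Fin.rev_rev i⟩

/-- `φ(π)ᵢ = (N+1) - π_{N+1-i}`. -/
def phiMap {N : ℕ} (π : Equiv.Perm (Fin N)) : Equiv.Perm (Fin N) :=
  ((revPerm N).trans π).trans (revPerm N)

/-! ### Lattice paths.

A path with `L` unit steps is encoded by `s : Fin L → Bool` (`true` = up-step `(1,1)`,
`false` = down-step `(1,-1)`). -/

/-- The vertical displacement of the `j`-th step. -/
def stepVal {L : ℕ} (s : Fin L → Bool) (j : ℕ) : ℤ :=
  if h : j < L then (if s ⟨j, h⟩ then 1 else -1) else 0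

/-- The height of the path after `i` steps. -/
def pht {L : ℕ} (s : Fin L → Bool) (i : ℕ) : ℤ := ∑ j ∈ Finset.range i, stepVal s j

/-- A Dyck path: stays (weakly) above the `x`-axis and ends at height `0`. -/
def IsDyck {L : ℕ} (s : Fin L → Bool) : Prop :=
  (∀ i ∈ Finset.range (L + 1), 0 ≤ pht s i) ∧ pht s L = 0

/-- The Dyck paths with `L` steps. -/
def dyckPaths (L : ℕ) : Finset (Fin L → Bool) := Finset.univ.filter fun s => IsDyck s

/-- The (indices of the) valleys of a path: a down-step followed by an up-step. -/
def valleys {L : ℕ} (s : Fin L → Bool) : Finset ℕ :=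
  (Finset.Icc 1 (L - 1)).filter fun i => stepVal s (i - 1) = -1 ∧ stepVal s i = 1

/-- The (indices of the) peaks of a path: an up-step followed by a down-step. -/
def peaks {L : ℕ} (s : Fin L → Bool) : Finset ℕ :=
  (Finset.Icc 1 (L - 1)).filter fun i => stepVal s (i - 1) = 1 ∧ stepVal s i = -1

/-- The (indices of the) high peaks of a path: peaks of height at least `2`. -/
def highPeaks {L : ℕ} (s : Fin L → Bool) : Finset ℕ :=
  (peaks s).filter fun i => 2 ≤ pht s i

/-- The height over abscissa `x` of a path starting at `(-m, 0)`. -/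
def aht (m : ℕ) {L : ℕ} (s : Fin L → Bool) (x : ℤ) : ℤ := pht s (x + m).toNat

/-- `D₁ < D₂`, for `D₁` starting at `(-m₁,0)` and `D₂` at `(-m₂,0)`, `m₁ ≤ m₂`:
strictly below on the common range of abscissas. -/
def PathLT (m₁ m₂ : ℕ) {L₁ L₂ : ℕ} (s₁ : Fin L₁ → Bool) (s₂ : Fin L₂ → Bool) : Prop :=
  ∀ x ∈ Finset.Icc (-(m₁ : ℤ)) (m₁ : ℤ), aht m₁ s₁ x < aht m₂ s₂ x

/-- `D₁ ≤ D₂`: weakly below, sharing no step. -/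
def PathLE (m₁ m₂ : ℕ) {L₁ L₂ : ℕ} (s₁ : Fin L₁ → Bool) (s₂ : Fin L₂ → Bool) : Prop :=
  (∀ x ∈ Finset.Icc (-(m₁ : ℤ)) (m₁ : ℤ), aht m₁ s₁ x ≤ aht m₂ s₂ x) ∧
    ∀ x ∈ Finset.Icc (-(m₁ : ℤ)) ((m₁ : ℤ) - 1),
      ¬(aht m₁ s₁ x = aht m₂ s₂ x ∧ aht m₁ s₁ (x + 1) = aht m₂ s₂ (x + 1))

/-- The abscissas of the common lattice points of two paths. -/
def interPts (m₁ m₂ : ℕ) {L₁ L₂ : ℕ} (s₁ : Fin L₁ → Bool) (s₂ : Fin L₂ → Bool) : Finset ℤ :=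
  (Finset.Icc (-(m₁ : ℤ)) (m₁ : ℤ)).filter fun x => aht m₁ s₁ x = aht m₂ s₂ x

/-- `Dyck^k_{2n}`: tuples `(D₁, …, D_k)` with `D_i ∈ Dyck((-n-2i+2,0) → (n+2i-2,0))`
(0-based: `D_i` has half-length `n + 2i`). -/
abbrev DyckTuple (n k : ℕ) := ∀ i : Fin k, Fin (2 * (n + 2 * (i : ℕ))) → Bool

/-- The tuples `(D₁ ≤ D₂ ≤ ⋯ ≤ D_k) ∈ Dyck^k_{2n}`. -/
def weakTuples (n k : ℕ) : Finset (DyckTuple n k) :=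
  Finset.univ.filter fun D =>
    (∀ i : Fin k, IsDyck (D i)) ∧
      ∀ (i : ℕ) (h : i + 1 < k),
        PathLE (n + 2 * i) (n + 2 * (i + 1)) (D ⟨i, by omega⟩) (D ⟨i + 1, h⟩)

/-- The tuples `(D₁ < D₂ < ⋯ < D_k) ∈ Dyck^k_{2n}`. -/
def strictTuples (n k : ℕ) : Finset (DyckTuple n k) :=
  Finset.univ.filter fun D =>
    (∀ i : Fin k, IsDyck (D i)) ∧
      ∀ (i : ℕ) (h : i + 1 < k),
        PathLT (n + 2 * i) (n + 2 * (i + 1)) (D ⟨i, by omega⟩) (D ⟨i + 1, h⟩)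

/-- The lattice points of a path starting at `(-m, 0)`, as a finite subset of `ℤ × ℤ`. -/
def pathPoints (m : ℕ) {L : ℕ} (s : Fin L → Bool) : Finset (ℤ × ℤ) :=
  (Finset.range (L + 1)).image fun t : ℕ => (-(m : ℤ) + (t : ℤ), pht s t)

/-- The non-valley lattice points of a path starting at `(-m, 0)`. -/
def nonValleyPoints (m : ℕ) {L : ℕ} (s : Fin L → Bool) : Finset (ℤ × ℤ) :=
  ((Finset.range (L + 1)).filter fun t => t ∉ valleys s).image
    fun t : ℕ => (-(m : ℤ) + (t : ℤ), pht s t)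

section Weights

variable {F : Type*} [Field F]

/-- The `i`-th lattice point (in `ℤ × ℕ`) of a path starting at `(a, 0)`. -/
def ptOf (a : ℤ) {L : ℕ} (s : Fin L → Bool) (i : ℕ) : ℤ × ℕ := (a + i, (pht s i).toNat)

/-- `wt_V(D) = ∏_{p ∈ D} wt(p) · ∏_{p ∈ V(D)} w̃t(p)` for a path starting at `(a, 0)`. -/
def wtVal (wt wte : ℤ × ℕ → F) (a : ℤ) {L : ℕ} (s : Fin L → Bool) : F :=
  (∏ i ∈ Finset.range (L + 1), wt (ptOf a s i)) * ∏ i ∈ valleys s, wte (ptOf a s i)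

/-- `wt_HP(D) = ∏_{p ∈ D} wt(p) · ∏_{p ∈ HP(D)} w̃t(p)` for a path starting at `(a, 0)`. -/
def wtHigh (wt wte : ℤ × ℕ → F) (a : ℤ) {L : ℕ} (s : Fin L → Bool) : F :=
  (∏ i ∈ Finset.range (L + 1), wt (ptOf a s i)) * ∏ i ∈ highPeaks s, wte (ptOf a s i)

/-- `∏_{p ∈ D₁ ∩ D₂} f(p)`, for `D₁` starting at `(-m₁,0)` and `D₂` at `(-m₂,0)`. -/
def interProd (f : ℤ × ℕ → F) (m₁ m₂ : ℕ) {L₁ L₂ : ℕ}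
    (s₁ : Fin L₁ → Bool) (s₂ : Fin L₂ → Bool) : F :=
  ∏ x ∈ interPts m₁ m₂ s₁ s₂, f (x, (aht m₁ s₁ x).toNat)

/-- The sum over `(D₁ ≤ ⋯ ≤ D_k) ∈ Dyck^k_{2n}` of
`wt_V(D₁)⋯wt_V(D_k) ∏_{i=1}^{k-1} ∏_{p ∈ D_i ∩ D_{i+1}} (1 - w̃t(p)⁻¹)`. -/
def weakSum (wt wte : ℤ × ℕ → F) (n k : ℕ) : F :=
  ∑ D ∈ weakTuples n k,
    (∏ i : Fin k, wtVal wt wte (-(n : ℤ) - 2 * (i : ℕ)) (D i)) *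
      ∏ j : Fin (k - 1),
        interProd (fun p => 1 - (wte p)⁻¹) (n + 2 * (j : ℕ)) (n + 2 * ((j : ℕ) + 1))
          (D ⟨(j : ℕ), by have := j.isLt; omega⟩)
          (D ⟨(j : ℕ) + 1, by have := j.isLt; omega⟩)

/-- The sum over `(D₁ < ⋯ < D_k) ∈ Dyck^k_{2n}` of `wt_V(D₁)⋯wt_V(D_k)`. -/
def strictSum (wt wte : ℤ × ℕ → F) (n k : ℕ) : F :=
  ∑ D ∈ strictTuples n k, ∏ i : Fin k, wtVal wt wte (-(n : ℤ) - 2 * (i : ℕ)) (D i)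

end Weights

/-! ### Schröder paths.

A path with `L` steps is encoded by `st : Fin L → Fin 3`
(`0` = up-step `(1,1)`, `1` = down-step `(1,-1)`, `2` = horizontal step `(2,0)`). -/

/-- The horizontal displacement of the `j`-th step. -/
def stepX {L : ℕ} (st : Fin L → Fin 3) (j : ℕ) : ℕ :=
  if h : j < L then (if st ⟨j, h⟩ = 2 then 2 else 1) else 0

/-- The vertical displacement of the `j`-th step. -/
def stepY {L : ℕ} (st : Fin L → Fin 3) (j : ℕ) : ℤ :=
  if h : j < L then (if st ⟨j, h⟩ = 0 then 1 else if st ⟨j, h⟩ = 1 then -1 else 0) else 0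

/-- The horizontal position (relative to the start) after `j` steps. -/
def xpos {L : ℕ} (st : Fin L → Fin 3) (j : ℕ) : ℕ := ∑ t ∈ Finset.range j, stepX st t

/-- The height after `j` steps. -/
def ypos {L : ℕ} (st : Fin L → Fin 3) (j : ℕ) : ℤ := ∑ t ∈ Finset.range j, stepY st t

/-- A (little) Schröder path of horizontal span `2m`: nonnegative heights, ends at
height `0`, and no horizontal step on the `x`-axis. -/
def IsSch (m : ℕ) {L : ℕ} (st : Fin L → Fin 3) : Prop :=
  xpos st L = 2 * m ∧ (∀ j ∈ Finset.range (L + 1), 0 ≤ ypos st j) ∧ ypos st L = 0 ∧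
    ∀ j ∈ Finset.range L, stepX st j = 2 → ypos st j ≠ 0

/-- The height of a Schröder path over the relative abscissa `x` (midpoints of
horizontal steps get the height of that horizontal step). -/
def schHeight {L : ℕ} (st : Fin L → Fin 3) (x : ℕ) : ℤ :=
  ∑ t ∈ Finset.range L, if xpos st (t + 1) ≤ x then stepY st t else 0

/-- The relative abscissa `x` is the midpoint of a horizontal step. -/
def IsHMid {L : ℕ} (st : Fin L → Fin 3) (x : ℕ) : Prop :=
  ∃ j ∈ Finset.range L, stepX st j = 2 ∧ xpos st j + 1 = x

/-- The number of horizontal steps of a Schröder path. -/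
def hsCount {L : ℕ} (st : Fin L → Fin 3) : ℕ :=
  ((Finset.range L).filter fun j => stepX st j = 2).card

/-- `wt_Sch(c, S) = c^{hs(S)} ∏_{p ∈ S} wt(p)` for a Schröder path starting at `(a,0)`. -/
def wtSch {F : Type*} [Field F] (wt : ℤ × ℕ → F) (c : F) (a : ℤ) {L : ℕ}
    (st : Fin L → Fin 3) : F :=
  c ^ hsCount st * ∏ j ∈ Finset.range (L + 1), wt (a + xpos st j, (ypos st j).toNat)

/-- `φ_V(S) = D`: the Dyck path `D` (with `L'` steps) is obtained from the Schröder
path `S` by replacing each horizontal step by a down-step followed by an up-step. -/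
def PhiVEq {L L' : ℕ} (st : Fin L → Fin 3) (s : Fin L' → Bool) : Prop :=
  ∀ x ∈ Finset.range (L' + 1),
    pht s x = schHeight st x - (if IsHMid st x then 1 else 0)

/-- `φ_HP(S) = D`: the Dyck path `D` is obtained from the Schröder path `S` by
replacing each horizontal step by an up-step followed by a down-step. -/
def PhiHPEq {L L' : ℕ} (st : Fin L → Fin 3) (s : Fin L' → Bool) : Prop :=
  ∀ x ∈ Finset.range (L' + 1),
    pht s x = schHeight st x + (if IsHMid st x then 1 else 0)

/-! ### Young diagrams, excited and pleasant diagrams, reverse plane partitions. -/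

/-- The cells (1-based, matrix coordinates) of the staircase `δ_m = (m-1, m-2, …, 1)`. -/
def deltaCells (m : ℕ) : Finset (ℕ × ℕ) :=
  ((Finset.Icc 1 m) ×ˢ (Finset.Icc 1 m)).filter fun c => c.1 + c.2 ≤ m

/-- An excited move inside the Young diagram `lam`. -/
def ExcitedStep (lam : Finset (ℕ × ℕ)) (D D' : Finset (ℕ × ℕ)) : Prop :=
  ∃ i j : ℕ, (i, j) ∈ D ∧ (i + 1, j) ∉ D ∧ (i, j + 1) ∉ D ∧ (i + 1, j + 1) ∉ D ∧
    (i + 1, j + 1) ∈ lam ∧ D' = insert (i + 1, j + 1) (D.erase (i, j))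

/-- `D` is an excited diagram of `lam/mu`. -/
def IsExcited (lam mu D : Finset (ℕ × ℕ)) : Prop :=
  Relation.ReflTransGen (ExcitedStep lam) mu D

/-- `P` is a pleasant diagram of `lam/mu`: a subset of `lam \ D` for an excited diagram `D`. -/
def IsPleasant (lam mu : Finset (ℕ × ℕ)) (P : Finset (ℕ × ℕ)) : Prop :=
  ∃ D, IsExcited lam mu D ∧ P ⊆ lam \ D

/-- `p(lam/mu)`, the number of pleasant diagrams of `lam/mu`. -/
def pleasantCount (lam mu : Finset (ℕ × ℕ)) : ℕ :=
  Set.ncard {P : Finset (ℕ × ℕ) | IsPleasant lam mu P}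

/-- A reverse plane partition on the skew shape `shape`: a filling by nonnegative
integers (vanishing off the shape) weakly increasing along rows and columns. -/
def IsRPP (shape : Finset (ℕ × ℕ)) (f : ℕ × ℕ → ℕ) : Prop :=
  (∀ c, c ∉ shape → f c = 0) ∧
    (∀ i j : ℕ, (i, j) ∈ shape → (i, j + 1) ∈ shape → f (i, j) ≤ f (i, j + 1)) ∧
    ∀ i j : ℕ, (i, j) ∈ shape → (i + 1, j) ∈ shape → f (i, j) ≤ f (i + 1, j)

/-- `∑_{π ∈ RPP(shape)} q^{|π|}` as a formal power series in `q`. -/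
def rppGF (shape : Finset (ℕ × ℕ)) : PowerSeries ℚ :=
  PowerSeries.mk fun N =>
    (Set.ncard {f : ℕ × ℕ → ℕ | IsRPP shape f ∧ ∑ c ∈ shape, f c = N} : ℚ)

/-- `(q; q)_m = ∏_{i=1}^m (1 - q^i)` as a formal power series. -/
def pochPS (m : ℕ) : PowerSeries ℚ :=
  ∏ i ∈ Finset.Icc 1 m, (1 - (PowerSeries.X : PowerSeries ℚ) ^ i)

/-- `E*_N(q) = ∑_{π ∈ Alt_N} q^{maj(κ_N π⁻¹)}` as a formal power series. -/
def EstarPS (N : ℕ) : PowerSeries ℚ :=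
  ∑ π ∈ altPerms N, (PowerSeries.X : PowerSeries ℚ) ^ majKappaInv N π

/-- `E*_m(q)/(q;q)_m` for `m ≥ 0`, and `0` for `m < 0`. -/
def EstarEntry (m : ℤ) : PowerSeries ℚ :=
  if m < 0 then 0 else EstarPS m.toNat * (pochPS m.toNat)⁻¹

/-- The Gaussian binomial coefficient `[N choose M]_q` as a formal power series. -/
def gaussPS (N M : ℕ) : PowerSeries ℚ :=
  pochPS N * (pochPS M * pochPS (N - M))⁻¹

/-- The weighted count of nonnegative paths with `i` steps from height `h` to height `0`,
a path being weighted by the product of `W` over the heights of all its points. -/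
def dyckGF {F : Type*} [Field F] (W : ℕ → F) : ℕ → ℕ → F
  | 0, h => if h = 0 then W 0 else 0
  | i + 1, 0 => W 0 * dyckGF W i 1
  | i + 1, h + 1 => W (h + 1) * (dyckGF W i (h + 2) + dyckGF W i h)

theorem dyckGF_eq_zero_of_lt {F : Type*} [Field F] (W : ℕ → F) {i h : ℕ} (hi : i < h) :
    dyckGF W i h = 0 := by
  induction i generalizing h with
  | zero => rw [dyckGF, if_neg (by omega)]
  | succ i ih =>
    obtain ⟨h, rfl⟩ : ∃ k, h = k + 1 := ⟨h - 1, by omega⟩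
    rw [dyckGF, ih (by omega), ih (by omega), add_zero, mul_zero]

/-- The weight `q ^ h / (1 - q ^ (2 * h + 1))` of a point at height `h`. -/
def heightWeight (q : ℝ) (h : ℕ) : ℝ := q ^ h / (1 - q ^ (2 * h + 1))

/-- With `x = q ^ j`, `evenCoeff q x b / heightWeight q (2 * b)` is the coefficient of the
`2 * b`-th little `q`-Legendre polynomial in the expansion of the monomial of degree `j`. -/
def evenCoeff (q x : ℝ) : ℕ → ℝ
  | 0 => 1 / (1 - x)
  | b + 1 => -evenCoeff q x b * (q ^ (2 * b + 2) * (q ^ (2 * b + 1) - x)) /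
      (1 - x * q ^ (2 * b + 2))

/-- The odd-degree analogue of `evenCoeff`, for the monomial of degree `j + 1`. -/
def oddCoeff (q x : ℝ) (b : ℕ) : ℝ :=
  evenCoeff q x b * (1 - x) * q ^ (2 * b + 1) / (1 - x * q ^ (2 * b + 2))

section Coefficients

variable {q x : ℝ}

theorem one_sub_pow_succ_ne_zero (hq : 0 < q) (hq1 : q < 1) (k : ℕ) : 1 - q ^ (k + 1) ≠ 0 :=
  (sub_pos.2 (pow_lt_one₀ hq.le hq1 k.succ_ne_zero)).ne'

theorem one_sub_mul_pow_ne_zero (hq : 0 < q) (hq1 : q < 1) (hx : 0 < x) (hx1 : x < 1) (k : ℕ) :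
    1 - x * q ^ k ≠ 0 :=
  (sub_pos.2 (mul_lt_one_of_nonneg_of_lt_one_left hx.le hx1 (pow_le_one₀ hq.le hq1.le))).ne'

theorem heightWeight_ne_zero (hq : 0 < q) (hq1 : q < 1) (h : ℕ) : heightWeight q h ≠ 0 :=
  div_ne_zero (pow_ne_zero _ hq.ne') (one_sub_pow_succ_ne_zero hq hq1 _)

theorem evenCoeff_self_succ (q : ℝ) (b : ℕ) : evenCoeff q q (b + 1) = 0 := by
  induction b with
  | zero => simp [evenCoeff]
  | succ b ih => rw [evenCoeff, ih]; simp

theorem oddCoeff_succ (hq : 0 < q) (hq1 : q < 1) (hx : 0 < x) (hx1 : x < 1) (b : ℕ) :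
    oddCoeff q x (b + 1) =
      -oddCoeff q x b * (q ^ (2 * b + 4) * (q ^ (2 * b + 1) - x)) / (1 - x * q ^ (2 * b + 4)) := by
  have h1 := one_sub_mul_pow_ne_zero hq hq1 hx hx1 (2 * b + 2)
  have h2 := one_sub_mul_pow_ne_zero hq hq1 hx hx1 (2 * b + 4)
  rw [oddCoeff, oddCoeff, evenCoeff, show 2 * (b + 1) + 2 = 2 * b + 4 by ring,
    show 2 * (b + 1) + 1 = 2 * b + 3 by ring]
  field_simp
  ring

theorem evenCoeff_mul_sq_succ (hq : 0 < q) (hq1 : q < 1) (hx : 0 < x) (hx1 : x < 1) (b : ℕ) :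
    evenCoeff q (x * q ^ 2) (b + 1) =
      -oddCoeff q x b * (q ^ (2 * b + 2) * (1 - x * q)) / (1 - x * q ^ (2 * b + 4)) := by
  have h0 : 1 - x ≠ 0 := (sub_pos.2 hx1).ne'
  induction b with
  | zero =>
    have h1 := one_sub_mul_pow_ne_zero hq hq1 hx hx1 2
    have h2 := one_sub_mul_pow_ne_zero hq hq1 hx hx1 4
    have h3 : 1 - x * q ^ 2 * q ^ 2 ≠ 0 := by rwa [mul_assoc, ← pow_add]
    simp only [evenCoeff, oddCoeff, mul_zero, zero_add]
    field_simp
  | succ b ih =>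
    have h2 := one_sub_mul_pow_ne_zero hq hq1 hx hx1 (2 * b + 4)
    have h3 := one_sub_mul_pow_ne_zero hq hq1 hx hx1 (2 * b + 6)
    rw [evenCoeff, ih, oddCoeff_succ hq hq1 hx hx1, show 2 * (b + 1) + 2 = 2 * b + 4 by ring,
      show 2 * (b + 1) + 4 = 2 * b + 6 by ring, show 2 * (b + 1) + 1 = 2 * b + 3 by ring,
      show x * q ^ 2 * q ^ (2 * b + 4) = x * q ^ (2 * b + 6) by ring]
    field_simp
    ring

theorem evenCoeff_add_evenCoeff_succ (hq : 0 < q) (hq1 : q < 1) (hx : 0 < x) (hx1 : x < 1)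
    (b : ℕ) :
    evenCoeff q x b + evenCoeff q x (b + 1) =
      oddCoeff q x b / heightWeight q (2 * b + 1) / (1 - x) := by
  have h0 : 1 - x ≠ 0 := (sub_pos.2 hx1).ne'
  have h1 := one_sub_mul_pow_ne_zero hq hq1 hx hx1 (2 * b + 2)
  have h2 := one_sub_pow_succ_ne_zero hq hq1 (2 * (2 * b + 1))
  have h3 : q ^ (2 * b) ≠ 0 := (pow_pos hq _).ne'
  have h4 : q ≠ 0 := hq.ne'
  rw [evenCoeff, oddCoeff, heightWeight]
  rw [show q ^ (2 * (2 * b + 1) + 1) = (q ^ (2 * b)) ^ 2 * q ^ 3 by ring] at h2 ⊢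
  rw [pow_add q (2 * b) 2, ← mul_assoc x] at h1 ⊢
  rw [pow_add q (2 * b) 1, pow_one]
  generalize q ^ (2 * b) = y at h1 h2 h3 ⊢
  generalize hd : 1 - x * y * q ^ 2 = d at h1 ⊢
  field_simp
  rw [← hd]
  ring

theorem oddCoeff_add_oddCoeff_succ (hq : 0 < q) (hq1 : q < 1) (hx : 0 < x) (hx1 : x < 1)
    (b : ℕ) :
    oddCoeff q x b + oddCoeff q x (b + 1) =
      -(evenCoeff q (x * q ^ 2) (b + 1) / heightWeight q (2 * (b + 1))) / (1 - x * q) := by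
  have h0 : 1 - x * q ≠ 0 := by simpa using one_sub_mul_pow_ne_zero hq hq1 hx hx1 1
  have h1 := one_sub_mul_pow_ne_zero hq hq1 hx hx1 (2 * b + 4)
  have h2 := one_sub_pow_succ_ne_zero hq hq1 (2 * (2 * (b + 1)))
  have h3 : q ^ (2 * b) ≠ 0 := (pow_pos hq _).ne'
  have h4 : q ≠ 0 := hq.ne'
  rw [oddCoeff_succ hq hq1 hx hx1, evenCoeff_mul_sq_succ hq hq1 hx hx1, heightWeight]
  rw [show q ^ (2 * (2 * (b + 1)) + 1) = (q ^ (2 * b)) ^ 2 * q ^ 5 by ring] at h2 ⊢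
  rw [pow_add q (2 * b) 4, ← mul_assoc x] at h1 ⊢
  rw [show 2 * (b + 1) = 2 * b + 2 by ring, pow_add q (2 * b) 2, pow_add q (2 * b) 1, pow_one]
  generalize oddCoeff q x b = c
  generalize q ^ (2 * b) = y at h1 h2 h3 ⊢
  generalize hd : 1 - x * y * q ^ 4 = d at h1 ⊢
  generalize 1 - x * q = e at h0 ⊢
  field_simp
  rw [← hd]
  ring

theorem oddCoeff_zero (hq : 0 < q) (hq1 : q < 1) (hx : 0 < x) (hx1 : x < 1) :
    oddCoeff q x 0 = (1 - evenCoeff q (x * q ^ 2) 0 / heightWeight q 0) / (1 - x * q) := by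
  have h : 1 - x ≠ 0 := (sub_pos.2 hx1).ne'
  have h0 : 1 - x * q ≠ 0 := by simpa using one_sub_mul_pow_ne_zero hq hq1 hx hx1 1
  have h1 := one_sub_mul_pow_ne_zero hq hq1 hx hx1 2
  have h2 : 1 - q ≠ 0 := (sub_pos.2 hq1).ne'
  simp only [oddCoeff, evenCoeff, heightWeight, mul_zero, zero_add, pow_zero, pow_one]
  field_simp
  ring

/-- The `q`-Euler generating function expressed through Dyck paths, with the monomial parameter
`x = q ^ j`. -/
def monomialGF (q x : ℝ) (n : ℕ) : ℝ :=
  ∑ b ∈ range (n + 1),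
    evenCoeff q x b / heightWeight q (2 * b) * dyckGF (heightWeight q) (2 * n) (2 * b)

theorem monomialGF_zero (hq : 0 < q) (hq1 : q < 1) (x : ℝ) : monomialGF q x 0 = 1 / (1 - x) := by
  have := heightWeight_ne_zero hq hq1 0
  simp [monomialGF, evenCoeff, dyckGF, this]

theorem monomialGF_self (hq1 : q < 1) (n : ℕ) :
    monomialGF q q n = dyckGF (heightWeight q) (2 * n) 0 := by
  have : 1 - q ≠ 0 := (sub_pos.2 hq1).ne'
  rw [monomialGF, sum_range_succ']
  simp_rw [evenCoeff_self_succ]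
  simp [evenCoeff, heightWeight, this]

theorem monomialGF_succ (hq : 0 < q) (hq1 : q < 1) (hx : 0 < x) (hx1 : x < 1) (n : ℕ) :
    monomialGF q x (n + 1) =
      (monomialGF q q n - monomialGF q (x * q ^ 2) n) / ((1 - x * q) * (1 - x)) := by
  have hw := heightWeight_ne_zero hq hq1
  set v := dyckGF (heightWeight q) with hv
  have even_step : monomialGF q x (n + 1) =
      (∑ b ∈ range (n + 1),
        oddCoeff q x b / heightWeight q (2 * b + 1) * v (2 * n + 1) (2 * b + 1)) / (1 - x) := by
    have h1 : ∀ b, evenCoeff q x (b + 1) / heightWeight q (2 * (b + 1)) *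
        v (2 * (n + 1)) (2 * (b + 1)) =
        evenCoeff q x (b + 1) * v (2 * n + 1) (2 * (b + 1) + 1) +
          evenCoeff q x (b + 1) * v (2 * n + 1) (2 * b + 1) := by
      intro b
      have := hw (2 * b + 1 + 1)
      rw [show 2 * (b + 1) = 2 * b + 1 + 1 by ring, show 2 * (n + 1) = 2 * n + 1 + 1 by ring, hv,
        dyckGF]
      field_simp
    have h2 : evenCoeff q x 0 / heightWeight q (2 * 0) * v (2 * (n + 1)) (2 * 0) =
        evenCoeff q x 0 * v (2 * n + 1) (2 * 0 + 1) := by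
      have := hw 0
      rw [show 2 * (n + 1) = 2 * n + 1 + 1 by ring, hv, mul_zero, dyckGF]
      field_simp
    rw [monomialGF, sum_range_succ', h2, sum_congr rfl fun b _ => h1 b, sum_add_distrib,
      add_right_comm,
      ← sum_range_succ' (fun b => evenCoeff q x b * v (2 * n + 1) (2 * b + 1)), sum_range_succ,
      hv, dyckGF_eq_zero_of_lt _ (by omega), mul_zero, add_zero, ← sum_add_distrib, sum_div]
    refine sum_congr rfl fun b _ => ?_
    rw [← add_mul, evenCoeff_add_evenCoeff_succ hq hq1 hx hx1]
    ring
  have odd_step : ∑ b ∈ range (n + 1),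
        oddCoeff q x b / heightWeight q (2 * b + 1) * v (2 * n + 1) (2 * b + 1) =
      (v (2 * n) 0 - monomialGF q (x * q ^ 2) n) / (1 - x * q) := by
    have h1 : ∀ b, oddCoeff q x b / heightWeight q (2 * b + 1) * v (2 * n + 1) (2 * b + 1) =
        oddCoeff q x b * v (2 * n) (2 * (b + 1)) + oddCoeff q x b * v (2 * n) (2 * b) := by
      intro b
      have := hw (2 * b + 1)
      rw [hv, dyckGF, show 2 * b + 2 = 2 * (b + 1) by ring]
      field_simp
    rw [monomialGF, sum_congr rfl fun b _ => h1 b, sum_add_distrib, sum_range_succ, hv,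
      dyckGF_eq_zero_of_lt _ (show 2 * n < 2 * (n + 1) by omega), mul_zero, add_zero, ← hv,
      sum_range_succ' (fun b => oddCoeff q x b * v (2 * n) (2 * b)), ← add_assoc,
      ← sum_add_distrib, sum_range_succ', mul_zero, oddCoeff_zero hq hq1 hx hx1]
    simp_rw [← add_mul, oddCoeff_add_oddCoeff_succ hq hq1 hx hx1]
    have : ∀ b, -(evenCoeff q (x * q ^ 2) (b + 1) / heightWeight q (2 * (b + 1))) / (1 - x * q) *
        v (2 * n) (2 * (b + 1)) = -(1 - x * q)⁻¹ *
          (evenCoeff q (x * q ^ 2) (b + 1) / heightWeight q (2 * (b + 1)) *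
            v (2 * n) (2 * (b + 1))) := fun b => by ring
    simp_rw [this, ← mul_sum]
    ring
  rw [even_step, odd_step, monomialGF_self hq1, div_div]

end Coefficients

section PathSums

variable {F : Type*} [Field F]

theorem stepVal_cons_zero {L : ℕ} (b : Bool) (s : Fin L → Bool) :
    stepVal (Fin.cons b s : Fin (L + 1) → Bool) 0 = if b then 1 else -1 := by
  simp [stepVal]

theorem stepVal_cons_succ {L : ℕ} (b : Bool) (s : Fin L → Bool) (j : ℕ) :
    stepVal (Fin.cons b s : Fin (L + 1) → Bool) (j + 1) = stepVal s j := by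
  by_cases h : j < L
  · have : (⟨j + 1, by omega⟩ : Fin (L + 1)) = Fin.succ ⟨j, h⟩ := rfl
    rw [stepVal, stepVal, dif_pos h, dif_pos (by omega), this, Fin.cons_succ]
  · simp [stepVal, h]

theorem pht_zero {L : ℕ} (s : Fin L → Bool) : pht s 0 = 0 := by simp [pht]

theorem pht_cons_succ {L : ℕ} (b : Bool) (s : Fin L → Bool) (i : ℕ) :
    pht (Fin.cons b s : Fin (L + 1) → Bool) (i + 1) = (if b then 1 else -1) + pht s i := by
  simp only [pht, sum_range_succ', stepVal_cons_succ, stepVal_cons_zero]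
  ring

/-- The weight of the path `s` started at height `h`, or `0` if that path goes below the
`x`-axis or does not end on it. -/
def pathWeight (W : ℤ → F) {L : ℕ} (h : ℤ) (s : Fin L → Bool) : F :=
  if (∀ i ∈ range (L + 1), 0 ≤ h + pht s i) ∧ h + pht s L = 0 then
    ∏ i ∈ range (L + 1), W (h + pht s i) else 0

theorem pathWeight_of_neg (W : ℤ → F) {L : ℕ} {h : ℤ} (hh : h < 0) (s : Fin L → Bool) :
    pathWeight W h s = 0 := by
  refine if_neg fun H => ?_
  have := H.1 0 (by simp)
  rw [pht_zero] at this
  omega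

theorem pathWeight_cons (W : ℤ → F) {L : ℕ} {h : ℤ} (hh : 0 ≤ h) (b : Bool) (s : Fin L → Bool) :
    pathWeight W h (Fin.cons b s : Fin (L + 1) → Bool) =
      W h * pathWeight W (h + if b then 1 else -1) s := by
  have hiff : ((∀ i ∈ range (L + 1 + 1), 0 ≤ h + pht (Fin.cons b s : Fin (L + 1) → Bool) i) ∧
      h + pht (Fin.cons b s : Fin (L + 1) → Bool) (L + 1) = 0) ↔
      ((∀ i ∈ range (L + 1), 0 ≤ (h + if b then 1 else -1) + pht s i) ∧
        (h + if b then 1 else -1) + pht s L = 0) := by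
    rw [pht_cons_succ, ← add_assoc h]
    refine and_congr_left fun _ => ⟨fun H i hi => ?_, fun H i hi => ?_⟩
    · have := H (i + 1) (by simpa using hi)
      rwa [pht_cons_succ, ← add_assoc] at this
    · cases i with
      | zero => rwa [pht_zero, add_zero]
      | succ i =>
        rw [pht_cons_succ, ← add_assoc]
        exact H i (by simpa using hi)
  simp only [pathWeight, hiff, mul_ite, mul_zero]
  refine if_congr Iff.rfl ?_ rfl
  rw [prod_range_succ', pht_zero, add_zero, mul_comm]
  simp only [pht_cons_succ, add_assoc]

theorem sum_pathWeight (W : ℤ → F) (L h : ℕ) :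
    ∑ s : Fin L → Bool, pathWeight W h s = dyckGF (fun k => W k) L h := by
  induction L generalizing h with
  | zero =>
    rw [Fintype.sum_unique, dyckGF]
    by_cases hh : h = 0 <;> simp [pathWeight, pht_zero, hh]
  | succ L ih =>
    rw [← (Fin.consEquiv fun _ : Fin (L + 1) => Bool).sum_comp, Fintype.sum_prod_type,
      Fintype.sum_bool]
    have hcons (b : Bool) (s : Fin L → Bool) :
        pathWeight W h (Fin.consEquiv (fun _ : Fin (L + 1) => Bool) (b, s)) =
          W h * pathWeight W (h + if b then 1 else -1) s :=
      pathWeight_cons W (Int.natCast_nonneg h) b s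
    simp only [hcons, ← mul_sum]
    cases h with
    | zero =>
      have := ih 1
      simp only [Nat.cast_one] at this
      simp [dyckGF, pathWeight_of_neg, this]
    | succ h =>
      have h1 := ih (h + 2)
      have h2 := ih h
      have e1 : ((h + 1 : ℕ) : ℤ) + 1 = ((h + 2 : ℕ) : ℤ) := by push_cast; ring
      have e2 : ((h + 1 : ℕ) : ℤ) + -1 = (h : ℤ) := by push_cast; ring
      simp only [if_true, Bool.false_eq_true, if_false, e1, e2, h1, h2, dyckGF, mul_add]

theorem sum_dyckPaths (W : ℤ → F) (L : ℕ) :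
    ∑ s ∈ dyckPaths L, ∏ i ∈ range (L + 1), W (pht s i) = dyckGF (fun k => W k) L 0 := by
  rw [← sum_pathWeight, dyckPaths, sum_filter]
  simp [pathWeight, IsDyck]

end PathSums

section ChainSums

open scoped ENNReal

/-- Consecutive entries of `f` are related by the relations `r 0, r 1, …`. -/
def Chain (r : ℕ → ℕ → ℕ → Prop) {N : ℕ} (f : Fin N → ℕ) : Prop :=
  ∀ (k : ℕ) (h : k + 1 < N), r k (f ⟨k, by omega⟩) (f ⟨k + 1, h⟩)

/-- The generating function of the chains `f` with `N + 1` entries by their sum, the first entry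
being counted `c` times. -/
def chainGF (x : ℝ≥0∞) (r : ℕ → ℕ → ℕ → Prop) (N c : ℕ) : ℝ≥0∞ :=
  ∑' f : Fin (N + 1) → ℕ, if Chain r f then x ^ (c * f 0 + ∑ i : Fin N, f i.succ) else 0

theorem chain_cons {r : ℕ → ℕ → ℕ → Prop} {N a : ℕ} {g : Fin (N + 1) → ℕ} :
    Chain r (Fin.cons a g : Fin (N + 2) → ℕ) ↔ r 0 a (g 0) ∧ Chain (fun k => r (k + 1)) g := by
  constructor
  · intro H
    have h0 := H 0 (by omega)
    exact ⟨h0, fun k h => H (k + 1) (by omega)⟩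
  · rintro ⟨h0, H⟩ k h
    cases k with
    | zero => exact h0
    | succ k => exact H k (by omega)

theorem tsum_ite_le_pow (y : ℝ≥0∞) (m : ℕ) :
    ∑' a : ℕ, (if m ≤ a then y ^ a else 0) = y ^ m * (1 - y)⁻¹ := by
  rw [← ENNReal.tsum_geometric, ← ENNReal.tsum_mul_left,
    ← (add_right_injective m).tsum_eq (f := fun a => if m ≤ a then y ^ a else 0)]
  · exact tsum_congr fun a => by simp [pow_add]
  · intro a ha
    have : m ≤ a := by
      by_contra h
      simp [h] at ha
    exact ⟨a - m, by simp [this]⟩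

theorem chainGF_zero (x : ℝ≥0∞) (r : ℕ → ℕ → ℕ → Prop) (c : ℕ) :
    chainGF x r 0 c = (1 - x ^ c)⁻¹ := by
  rw [chainGF, ← ENNReal.tsum_geometric, ← (Equiv.funUnique (Fin 1) ℕ).symm.tsum_eq]
  refine tsum_congr fun a => ?_
  have : Chain r ((Equiv.funUnique (Fin 1) ℕ).symm a) := fun k h => by omega
  rw [if_pos this]
  simp [pow_mul]

theorem chainGF_succ (x : ℝ≥0∞) (r : ℕ → ℕ → ℕ → Prop) (N c : ℕ) :
    chainGF x r (N + 1) c = ∑' g : Fin (N + 1) → ℕ,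
      if Chain (fun k => r (k + 1)) g then
        x ^ (g 0 + ∑ i : Fin N, g i.succ) * ∑' a, (if r 0 a (g 0) then (x ^ c) ^ a else 0)
      else 0 := by
  rw [chainGF, ← (Fin.consEquiv fun _ : Fin (N + 2) => ℕ).tsum_eq, ENNReal.tsum_prod',
    ENNReal.tsum_comm]
  refine tsum_congr fun g => ?_
  have hterm (a : ℕ) : (if Chain r (Fin.consEquiv (fun _ : Fin (N + 2) => ℕ) (a, g)) then
      x ^ (c * (Fin.consEquiv (fun _ : Fin (N + 2) => ℕ) (a, g)) 0 +
        ∑ i : Fin (N + 1), (Fin.consEquiv (fun _ : Fin (N + 2) => ℕ) (a, g)) i.succ) else 0) =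
      if Chain (fun k => r (k + 1)) g then
        x ^ (g 0 + ∑ i : Fin N, g i.succ) * (if r 0 a (g 0) then (x ^ c) ^ a else 0) else 0 := by
    have hc : Chain r (Fin.consEquiv (fun _ : Fin (N + 2) => ℕ) (a, g)) ↔
      r 0 a (g 0) ∧ Chain (fun k => r (k + 1)) g := chain_cons
    rw [if_congr hc rfl rfl, ite_and, ← Fin.sum_univ_succ]
    by_cases h1 : r 0 a (g 0) <;> by_cases h2 : Chain (fun k => r (k + 1)) g
    · simp only [h1, h2, if_true, ← pow_mul, ← pow_add]
      rw [add_comm]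
      rfl
    all_goals simp [h1, h2]
  rw [tsum_congr hterm]
  split_ifs
  · rw [ENNReal.tsum_mul_left]
  · simp

theorem chainGF_succ_of_le {r : ℕ → ℕ → ℕ → Prop} {s : ℕ} (hr : ∀ a b, r 0 a b ↔ b + s ≤ a)
    (x : ℝ≥0∞) (N c : ℕ) :
    chainGF x r (N + 1) c =
      x ^ (c * s) * (1 - x ^ c)⁻¹ * chainGF x (fun k => r (k + 1)) N (c + 1) := by
  rw [chainGF_succ, chainGF, ← ENNReal.tsum_mul_left]
  refine tsum_congr fun g => ?_
  simp only [hr, tsum_ite_le_pow, mul_ite, mul_zero]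
  refine if_congr Iff.rfl ?_ rfl
  ring

theorem chainGF_succ_of_lt {r : ℕ → ℕ → ℕ → Prop} (hr : ∀ a b, r 0 a b ↔ a < b)
    (x : ℝ≥0∞) (N c : ℕ) :
    chainGF x r (N + 1) c + (1 - x ^ c)⁻¹ * chainGF x (fun k => r (k + 1)) N (c + 1) =
      (1 - x ^ c)⁻¹ * chainGF x (fun k => r (k + 1)) N 1 := by
  rw [chainGF_succ, chainGF, chainGF, ← ENNReal.tsum_mul_left, ← ENNReal.tsum_mul_left,
    ← ENNReal.tsum_add]
  refine tsum_congr fun g => ?_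
  by_cases hg : Chain (fun k => r (k + 1)) g
  · have hsplit : ∑' a, (if a < g 0 then (x ^ c) ^ a else 0) + (x ^ c) ^ g 0 * (1 - x ^ c)⁻¹ =
        (1 - x ^ c)⁻¹ := by
      rw [← tsum_ite_le_pow, ← ENNReal.tsum_add, ← ENNReal.tsum_geometric]
      refine tsum_congr fun a => ?_
      by_cases h : a < g 0
      · simp [h, not_le.2 h]
      · simp [h, not_lt.1 h]
    simp only [hg, hr, if_true]
    conv_rhs => rw [← hsplit]
    ring
  · simp [hg]

theorem chainGF_of_le (s : ℕ → ℕ) (x : ℝ≥0∞) (N c : ℕ) :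
    chainGF x (fun k a b => b + s k ≤ a) N c =
      x ^ (∑ k ∈ range N, (c + k) * s k) * ∏ k ∈ range (N + 1), (1 - x ^ (c + k))⁻¹ := by
  induction N generalizing s c with
  | zero => simp [chainGF_zero]
  | succ N ih =>
    rw [chainGF_succ_of_le (s := s 0) (fun _ _ => Iff.rfl), ih (fun k => s (k + 1)),
      prod_range_succ' _ (N + 1), sum_range_succ', pow_add]
    simp only [add_zero, add_assoc, add_comm 1]
    ring

end ChainSums

section Standardization

open scoped ENNReal

theorem word_succ {N : ℕ} (π : Equiv.Perm (Fin N)) (k : Fin N) :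
    word π (k + 1) = (π k : ℕ) + 1 := by
  have h : 1 ≤ (k : ℕ) + 1 ∧ (k : ℕ) + 1 ≤ N := ⟨by omega, k.isLt⟩
  rw [word, dif_pos h]
  rfl

/-- The indicator of a descent of `σ` at `k + 1`. -/
def descentInd {N : ℕ} (σ : Equiv.Perm (Fin N)) (k : ℕ) : ℕ :=
  if word σ (k + 2) < word σ (k + 1) then 1 else 0

theorem descentInd_eq {N : ℕ} (σ : Equiv.Perm (Fin N)) {k : ℕ} (h : k + 1 < N) :
    descentInd σ k = if σ ⟨k + 1, h⟩ < σ ⟨k, by omega⟩ then 1 else 0 := by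
  have h1 := word_succ σ ⟨k, by omega⟩
  have h2 := word_succ σ ⟨k + 1, h⟩
  simp only at h1 h2
  rw [descentInd, h1, h2]
  simp only [add_lt_add_iff_right, Fin.val_fin_lt]

theorem majW_word {N : ℕ} (σ : Equiv.Perm (Fin (N + 1))) :
    majW (N + 1) (word σ) = ∑ k ∈ range N, (1 + k) * descentInd σ k := by
  rw [majW, Nat.add_sub_cancel, ← Ico_add_one_right_eq_Icc, sum_Ico_eq_sum_range]
  refine sum_congr rfl fun k _ => ?_
  rw [descentInd, mul_ite, mul_one, mul_zero, add_comm 1 k]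

/-- The permutation that lists the positions of `f` by weakly decreasing entry, equal entries
being listed from left to right. -/
def sortDesc {N : ℕ} (f : Fin N → ℕ) : Equiv.Perm (Fin N) :=
  Tuple.sort (OrderDual.toDual ∘ f)

theorem sortDesc_eq_iff {N : ℕ} (f : Fin N → ℕ) (σ : Equiv.Perm (Fin N)) :
    sortDesc f = σ ↔
      Antitone (f ∘ σ) ∧ ∀ i j, i < j → f (σ i) = f (σ j) → σ i < σ j := by
  rw [eq_comm, sortDesc, Tuple.eq_sort_iff]
  rfl

theorem sortDesc_eq_iff_chain {N : ℕ} (f : Fin N → ℕ) (σ : Equiv.Perm (Fin N)) :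
    sortDesc f = σ ↔ Chain (fun k a b => b + descentInd σ k ≤ a) (f ∘ σ) := by
  rw [sortDesc_eq_iff]
  constructor
  · rintro ⟨hanti, hties⟩ k h
    have hlt : (⟨k, by omega⟩ : Fin N) < ⟨k + 1, h⟩ := Nat.lt_succ_self k
    have h1 := hanti hlt.le
    rw [descentInd_eq σ h]
    split_ifs with hd
    · refine Nat.succ_le_of_lt (lt_of_le_of_ne h1 fun he => ?_)
      exact (hties _ _ hlt he.symm).not_gt hd
    · simpa using h1
  · intro H
    cases N with
    | zero => exact ⟨fun i => i.elim0, fun i => i.elim0⟩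
    | succ N =>
      have hanti : Antitone (f ∘ σ) := Fin.antitone_iff_succ_le.2 fun i =>
        le_trans (Nat.le_add_right _ _) (H i (Nat.succ_lt_succ i.isLt))
      refine ⟨hanti, fun i j hij => ?_⟩
      induction j using Fin.induction with
      | zero => exact absurd hij (Fin.not_lt_zero i)
      | succ j ih =>
        intro he
        have hle : i ≤ j.castSucc := Fin.le_castSucc_iff.2 hij
        have he' : f (σ i) = f (σ j.castSucc) :=
          le_antisymm (he.le.trans (hanti (Fin.castSucc_lt_succ).le)) (hanti hle)
        have hstep : σ j.castSucc < σ j.succ := by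
          have hj := H j (Nat.succ_lt_succ j.isLt)
          simp only [descentInd_eq σ (Nat.succ_lt_succ j.isLt)] at hj
          split_ifs at hj with hd
          · have : f (σ j.succ) + 1 ≤ f (σ j.castSucc) := hj
            omega
          · refine lt_of_le_of_ne (not_lt.1 hd) fun h => ?_
            exact (Fin.castSucc_lt_succ (i := j)).ne (σ.injective h)
        rcases hle.eq_or_lt with rfl | hlt
        · exact hstep
        · exact (ih hlt he').trans hstep

theorem sortDesc_symm_lt_iff {N : ℕ} (f : Fin N → ℕ) {i j : Fin N} (hij : i < j) :
    (sortDesc f).symm i < (sortDesc f).symm j ↔ f j ≤ f i := by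
  obtain ⟨hanti, hties⟩ := (sortDesc_eq_iff f _).1 rfl
  constructor
  · intro h
    simpa using hanti h.le
  · intro h
    by_contra! hlt
    have hlt' := lt_of_le_of_ne hlt fun he => hij.ne' ((sortDesc f).symm.injective he)
    have h1 := hanti hlt
    simp only [Function.comp_apply, Equiv.apply_symm_apply] at h1
    have := hties _ _ hlt' (by simpa using le_antisymm h h1)
    simp only [Equiv.apply_symm_apply] at this
    exact this.not_gt hij

/-- The relations `f 0 ≥ f 1 < f 2 ≥ f 3 < ⋯`. -/
def zigzag (k a b : ℕ) : Prop := if k % 2 = 0 then b ≤ a else a < b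

theorem isAltW_sortDesc_symm {N : ℕ} (f : Fin N → ℕ) :
    IsAltW N (word (sortDesc f).symm) ↔ Chain zigzag f := by
  have key (k : ℕ) (h : k + 1 < N) :
      ((word (sortDesc f).symm (k + 1) < word (sortDesc f).symm (k + 2) ↔
          f ⟨k + 1, h⟩ ≤ f ⟨k, by omega⟩) ∧
        (word (sortDesc f).symm (k + 2) < word (sortDesc f).symm (k + 1) ↔
          f ⟨k, by omega⟩ < f ⟨k + 1, h⟩)) := by
    have h1 := word_succ (sortDesc f).symm ⟨k, by omega⟩
    have h2 := word_succ (sortDesc f).symm ⟨k + 1, h⟩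
    simp only at h1 h2
    have hlt : (⟨k, by omega⟩ : Fin N) < ⟨k + 1, h⟩ := Nat.lt_succ_self k
    have h3 := sortDesc_symm_lt_iff f hlt
    have hne : (sortDesc f).symm ⟨k, by omega⟩ ≠ (sortDesc f).symm ⟨k + 1, h⟩ :=
      fun he => hlt.ne ((sortDesc f).symm.injective he)
    rw [h1, h2, ← h3, ← not_le (a := f ⟨k + 1, h⟩), ← h3]
    simp only [add_lt_add_iff_right, Fin.val_fin_lt, true_and, not_lt]
    exact ⟨le_of_lt, fun hle => lt_of_le_of_ne hle hne.symm⟩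
  constructor
  · intro H k h
    have := H (k + 1) (by simp; omega)
    rw [(key k h).1, (key k h).2] at this
    unfold zigzag
    split_ifs with hk
    · exact this.1 (by omega)
    · exact this.2 (by omega)
  · intro H i hi
    obtain ⟨k, rfl⟩ : ∃ k, i = k + 1 := ⟨i - 1, by simp at hi; omega⟩
    have h : k + 1 < N := by simp at hi; omega
    have := H k h
    unfold zigzag at this
    rw [(key k h).1, (key k h).2]
    split_ifs at this with hk
    · exact ⟨fun _ => this, fun _ => by omega⟩
    · exact ⟨fun _ => by omega, fun _ => this⟩

theorem chainGF_zigzag_eq_sum (x : ℝ≥0∞) (N : ℕ) :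
    chainGF x zigzag N 1 =
      (∑ π ∈ altPerms (N + 1), x ^ majInv (N + 1) π) *
        ∏ i ∈ Icc 1 (N + 1), (1 - x ^ i)⁻¹ := by
  have hfiber (σ : Equiv.Perm (Fin (N + 1))) :
      ∑' f : Fin (N + 1) → ℕ, (if sortDesc f = σ then x ^ ∑ i, f i else 0) =
        x ^ majW (N + 1) (word σ) * ∏ i ∈ Icc 1 (N + 1), (1 - x ^ i)⁻¹ := by
    rw [majW_word, ← Ico_add_one_right_eq_Icc, prod_Ico_eq_prod_range, Nat.add_sub_cancel,
      ← chainGF_of_le, chainGF,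
      ← (σ.arrowCongr (Equiv.refl ℕ)).tsum_eq]
    refine tsum_congr fun g => ?_
    have hg : (σ.arrowCongr (Equiv.refl ℕ)) g ∘ σ = g := by
      ext i
      simp [Equiv.arrowCongr]
    rw [if_congr (sortDesc_eq_iff_chain _ σ) rfl rfl, hg, one_mul, ← Fin.sum_univ_succ,
      ← Equiv.sum_comp σ]
    simp [Equiv.arrowCongr]
  have hsplit (f : Fin (N + 1) → ℕ) :
      (if Chain zigzag f then x ^ (1 * f 0 + ∑ i : Fin N, f i.succ) else 0) =
        ∑ π ∈ altPerms (N + 1), if sortDesc f = π.symm then x ^ ∑ i, f i else 0 := by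
    have hπ (π : Equiv.Perm (Fin (N + 1))) : sortDesc f = π.symm ↔ π = (sortDesc f).symm :=
      ⟨fun h => by rw [h, Equiv.symm_symm], fun h => by rw [h, Equiv.symm_symm]⟩
    simp only [hπ, sum_ite_eq', altPerms, mem_filter, mem_univ, true_and, isAltW_sortDesc_symm,
      one_mul, Fin.sum_univ_succ]
  rw [chainGF, tsum_congr hsplit, Summable.tsum_finsetSum fun _ _ => ENNReal.summable, sum_mul]
  exact sum_congr rfl fun π _ => hfiber π.symm

theorem zigzag_add_two : (fun k => zigzag (k + 1 + 1)) = zigzag := by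
  funext k a b
  rw [zigzag, zigzag, show (k + 1 + 1) % 2 = k % 2 by omega]

theorem toReal_inv_one_sub_ofReal_pow {q : ℝ} (hq : 0 < q) (hq1 : q < 1) (k : ℕ) :
    ((1 - ENNReal.ofReal q ^ k)⁻¹).toReal = (1 - q ^ k)⁻¹ := by
  rw [← ENNReal.ofReal_pow hq.le, ← ENNReal.ofReal_one,
    ← ENNReal.ofReal_sub _ (pow_nonneg hq.le k), ENNReal.toReal_inv,
    ENNReal.toReal_ofReal (sub_nonneg.2 (pow_le_one₀ hq.le hq1.le))]

theorem chainGF_zigzag_toReal {q : ℝ} (hq : 0 < q) (hq1 : q < 1) (n c : ℕ) :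
    chainGF (ENNReal.ofReal q) zigzag (2 * n) (c + 1) ≠ ∞ ∧
      (chainGF (ENNReal.ofReal q) zigzag (2 * n) (c + 1)).toReal =
        monomialGF q (q ^ (c + 1)) n := by
  have hfin (k : ℕ) : (1 - ENNReal.ofReal q ^ (k + 1))⁻¹ ≠ ∞ := by
    rw [ENNReal.inv_ne_top, ← pos_iff_ne_zero, tsub_pos_iff_lt]
    exact pow_lt_one₀ (by simp) (by simpa using hq1) k.succ_ne_zero
  induction n generalizing c with
  | zero =>
    rw [mul_zero, chainGF_zero]
    exact ⟨hfin c, by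
      rw [toReal_inv_one_sub_ofReal_pow hq hq1, monomialGF_zero hq hq1, one_div]⟩
  | succ n ih =>
    have h1 := chainGF_succ_of_le (r := zigzag) (s := 0) (fun _ _ => Iff.rfl) (ENNReal.ofReal q)
      (2 * n + 1) (c + 1)
    have h2 := chainGF_succ_of_lt (r := fun k => zigzag (k + 1)) (fun _ _ => Iff.rfl)
      (ENNReal.ofReal q) (2 * n) (c + 1 + 1)
    simp only [zigzag_add_two] at h2
    rw [mul_zero, pow_zero, one_mul] at h1
    obtain ⟨f1, e1⟩ := ih 0
    obtain ⟨f2, e2⟩ := ih (c + 1 + 1)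
    have f3 : chainGF (ENNReal.ofReal q) (fun k => zigzag (k + 1)) (2 * n + 1) (c + 1 + 1) ≠ ∞ :=
      ne_top_of_le_ne_top (h2 ▸ ENNReal.mul_ne_top (hfin _) f1) le_self_add
    have h3 := congrArg ENNReal.toReal h2
    rw [ENNReal.toReal_add f3 (ENNReal.mul_ne_top (hfin _) f2), ENNReal.toReal_mul,
      ENNReal.toReal_mul, toReal_inv_one_sub_ofReal_pow hq hq1, e2, e1] at h3
    rw [show 2 * (n + 1) = 2 * n + 1 + 1 by ring, h1]
    refine ⟨ENNReal.mul_ne_top (hfin c) f3, ?_⟩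
    rw [ENNReal.toReal_mul, eq_sub_of_add_eq h3, toReal_inv_one_sub_ofReal_pow hq hq1,
      monomialGF_succ (x := q ^ (c + 1)) hq hq1 (pow_pos hq _) (pow_lt_one₀ hq.le hq1 c.succ_ne_zero), zero_add,
      pow_one, show q ^ (c + 1) * q ^ 2 = q ^ (c + 1 + 1 + 1) by ring, ← pow_succ]
    rw [div_eq_mul_inv, mul_inv]
    ring

theorem sum_altPerms_eq_sum_dyckPaths {q : ℝ} (hq : 0 < q) (hq1 : q < 1) (n : ℕ) :
    (∑ π ∈ altPerms (2 * n + 1), q ^ majInv (2 * n + 1) π) /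
        ∏ i ∈ Icc 1 (2 * n + 1), (1 - q ^ i) =
      ∑ s ∈ dyckPaths (2 * n), ∏ i ∈ range (2 * n + 1),
        q ^ pht s i / (1 - q ^ (2 * pht s i + 1)) := by
  have h := (chainGF_zigzag_toReal hq hq1 n 0).2
  rw [zero_add, pow_one, monomialGF_self hq1, chainGF_zigzag_eq_sum, ENNReal.toReal_mul,
    ENNReal.toReal_sum fun _ _ => ENNReal.pow_ne_top ENNReal.ofReal_ne_top,
    ENNReal.toReal_prod] at h
  simp only [toReal_inv_one_sub_ofReal_pow hq hq1, ENNReal.toReal_pow,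
    ENNReal.toReal_ofReal hq.le, prod_inv_distrib] at h
  rw [div_eq_mul_inv, h, sum_dyckPaths fun b : ℤ => q ^ b / (1 - q ^ (2 * b + 1))]
  congr 1

end Standardization

theorem exists_transcendental_mem_Ioo :
    ∃ q : ℝ, 0 < q ∧ q < 1 ∧ Transcendental ℚ q := by
  have hc : Set.Countable {x : ℝ | IsAlgebraic ℚ x} := Algebraic.countable ℚ ℝ
  by_contra! H
  refine (zero_lt_one' ℝ).not_ge (Cardinal.Real.Ioo_countable_iff.1 (hc.mono fun q hq => ?_))
  exact not_not.1 (H q hq.1 hq.2)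

theorem statement_0 (n : ℕ) :
    (∑ π ∈ altPerms (2 * n + 1), (RatFunc.X : RatFunc ℚ) ^ majInv (2 * n + 1) π) /
        ∏ i ∈ Finset.Icc 1 (2 * n + 1), (1 - (RatFunc.X : RatFunc ℚ) ^ i) =
      ∑ s ∈ dyckPaths (2 * n), ∏ i ∈ Finset.range (2 * n + 1),
        (RatFunc.X : RatFunc ℚ) ^ pht s i /
          (1 - (RatFunc.X : RatFunc ℚ) ^ (2 * pht s i + 1)) := by
  obtain ⟨q, hq, hq1, htr⟩ := exists_transcendental_mem_Ioo
  have hinj : Function.Injective (Polynomial.aeval (R := ℚ) q).toRingHom :=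
    transcendental_iff_injective.1 htr
  let φ : RatFunc ℚ →+* ℝ := RatFunc.liftRingHom (Polynomial.aeval q).toRingHom
    (nonZeroDivisors_le_comap_nonZeroDivisors_of_injective _ hinj)
  have hX : φ RatFunc.X = q := by
    rw [← RatFunc.algebraMap_X, RatFunc.liftRingHom_algebraMap]
    simp
  apply φ.injective
  simpa [hX] using sum_altPerms_eq_sum_dyckPaths hq hq1 n

end Paper
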